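/- Let (a, F) be a game with ξ := ess inf a > 0 and a non-constant (F-a.e.). Then the function n ↦ 1/H_n − n, where H_n := ∫_I 1/(a(x)+n) dF, is strictly increasing on (−ξ, ∞). -/

import Mathlib

/-!
Put `f = 1/(a+m)`, `g = 1/(a+n)` and `d = n - m > 0`. Then `g = φ ∘ f` with `φ t = t / (1 + d t)`,
which is strictly concave on `(0, ∞)`, so Jensen's inequality gives `∫ g < φ (∫ f)` because `f` is not
a.e. constant; taking inverses, `1/∫ g > 1/∫ f + d`, which is the claim. The strict Jensen inequality
is obtained by integrating the explicit gap (`gap_identity`) between `φ` and its tangent line at `∫ f`.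
-/

open MeasureTheory Real Set Filter Topology
open scoped Classical

/-- `1/H_ξ` where `H_ξ := ∫ 1/(a x − ess inf a) dF`, with the convention that
`1/H_ξ = 0` when `1/(a − ξ)` is not integrable (in particular when `H_ξ = ∞`). -/
noncomputable def invHxi (μ : MeasureTheory.Measure ℝ) (a : ℝ → ℝ) : ℝ :=
  if MeasureTheory.Integrable (fun x => (a x - essInf a μ)⁻¹) μ then
    (∫ x, (a x - essInf a μ)⁻¹ ∂μ)⁻¹
  else 0

/-- The pre-growth rate `G̃_u(t) = exp (∫ log (a x · t / u − t + 1) dF)`. -/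
noncomputable def preG (μ : MeasureTheory.Measure ℝ) (a : ℝ → ℝ) (u t : ℝ) : ℝ :=
  Real.exp (∫ x, Real.log (a x * t / u - t + 1) ∂μ)

/-- `H := ∫ 1/a dF`. -/
noncomputable def Hh (μ : MeasureTheory.Measure ℝ) (a : ℝ → ℝ) : ℝ :=
  ∫ x, (a x)⁻¹ ∂μ

/-- The tangent line to `t ↦ t / (1 + d t)` at `t = F`, minus the function, evaluated at `t = y⁻¹`. -/
lemma gap_identity {y d F : ℝ} (hy : 0 < y) (hd : 0 < d) (hF : 0 < F) :
    F / (1 + d * F) + (y⁻¹ - F) / (1 + d * F) ^ 2 - (y + d)⁻¹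
      = d * (y⁻¹ - F) ^ 2 / ((1 + d * y⁻¹) * (1 + d * F) ^ 2) := by
  have h1 : 0 < 1 + d * F := by positivity
  have h2 : 0 < y + d := by positivity
  have h3 : 1 + d * y⁻¹ = (y + d) / y := by field_simp
  rw [h3]
  field_simp
  ring

lemma integrable_inv_of_ge {μ : Measure ℝ} [IsProbabilityMeasure μ] {b : ℝ → ℝ}
    (hb : Measurable b) {δ : ℝ} (hδ : 0 < δ) (h : ∀ᵐ x ∂μ, δ ≤ b x) :
    Integrable (fun x => (b x)⁻¹) μ := by
  refine Integrable.of_bound hb.inv.aestronglyMeasurable δ⁻¹ ?_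
  filter_upwards [h] with x hx
  have : 0 < b x := hδ.trans_le hx
  rw [Real.norm_of_nonneg (by positivity)]
  gcongr

lemma integral_inv_pos_of_ge {μ : Measure ℝ} [IsProbabilityMeasure μ] {b : ℝ → ℝ}
    (hb : Measurable b) {δ : ℝ} (hδ : 0 < δ) (h : ∀ᵐ x ∂μ, δ ≤ b x) :
    0 < ∫ x, (b x)⁻¹ ∂μ := by
  have hnn : 0 ≤ᵐ[μ] fun x => (b x)⁻¹ := by
    filter_upwards [h] with x hx
    exact inv_nonneg.2 (hδ.le.trans hx)
  refine (integral_nonneg_of_ae hnn).lt_of_ne fun h0 => ?_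
  have h1 := (integral_eq_zero_iff_of_nonneg_ae hnn (integrable_inv_of_ge hb hδ h)).1 h0.symm
  obtain ⟨x, hx, hx'⟩ := (h1.and h).exists
  exact (inv_pos.2 (hδ.trans_le hx')).ne' hx

/-- If `b ≥ δ > 0` is not a.e. constant, translating it by `d > 0` raises its harmonic mean by more
than `d`. -/
lemma harmonic_translate {μ : Measure ℝ} [IsProbabilityMeasure μ] {b : ℝ → ℝ}
    (hb : Measurable b) {δ d : ℝ} (hδ : 0 < δ) (hd : 0 < d) (h : ∀ᵐ x ∂μ, δ ≤ b x)
    (hnc : ¬ ∃ c : ℝ, b =ᵐ[μ] fun _ => c) :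
    (∫ x, (b x)⁻¹ ∂μ)⁻¹ + d < (∫ x, (b x + d)⁻¹ ∂μ)⁻¹ := by
  have h' : ∀ᵐ x ∂μ, δ ≤ b x + d := h.mono fun x hx => by linarith
  have hf := integrable_inv_of_ge hb hδ h
  have hg := integrable_inv_of_ge (hb.add_const d) hδ h'
  have hF := integral_inv_pos_of_ge hb hδ h
  have hG := integral_inv_pos_of_ge (hb.add_const d) hδ h'
  set F := ∫ x, (b x)⁻¹ ∂μ with hFdef
  set G := ∫ x, (b x + d)⁻¹ ∂μ with hGdef
  have hdF : 0 < 1 + d * F := by positivity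
  have hquot : Integrable (fun x => ((b x)⁻¹ - F) / (1 + d * F) ^ 2) μ :=
    (hf.sub (integrable_const F)).div_const _
  have hlin : Integrable (fun x => F / (1 + d * F) + ((b x)⁻¹ - F) / (1 + d * F) ^ 2) μ :=
    (integrable_const _).add hquot
  have hint : ∫ x, (F / (1 + d * F) + ((b x)⁻¹ - F) / (1 + d * F) ^ 2 - (b x + d)⁻¹) ∂μ
      = F / (1 + d * F) - G := by
    rw [integral_sub hlin hg, integral_add (integrable_const _) hquot,
      integral_div ((1 + d * F) ^ 2) fun x => (b x)⁻¹ - F,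
      integral_sub hf (integrable_const F)]
    simp [← hFdef, ← hGdef]
  have hnn : 0 ≤ᵐ[μ] fun x =>
      F / (1 + d * F) + ((b x)⁻¹ - F) / (1 + d * F) ^ 2 - (b x + d)⁻¹ := by
    filter_upwards [h] with x hx
    have hx0 : 0 < b x := hδ.trans_le hx
    simp only [Pi.zero_apply]
    rw [gap_identity hx0 hd hF]
    positivity
  have hlt : G < F / (1 + d * F) := by
    rw [← sub_pos, ← hint]
    refine (integral_nonneg_of_ae hnn).lt_of_ne fun h0 => hnc ⟨F⁻¹, ?_⟩
    have h1 := (integral_eq_zero_iff_of_nonneg_ae hnn (hlin.sub hg)).1 h0.symm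
    filter_upwards [h, h1] with x hx hx1
    have hx0 : 0 < b x := hδ.trans_le hx
    simp only [Pi.zero_apply] at hx1
    rw [gap_identity hx0 hd hF, div_eq_zero_iff] at hx1
    have hden : (1 + d * (b x)⁻¹) * (1 + d * F) ^ 2 ≠ 0 := by positivity
    have hsq := (mul_eq_zero.1 (hx1.resolve_right hden)).resolve_left hd.ne'
    have : (b x)⁻¹ = F := sub_eq_zero.1 (pow_eq_zero_iff two_ne_zero |>.1 hsq)
    rw [← this, inv_inv]
  calc F⁻¹ + d = (F / (1 + d * F))⁻¹ := by field_simp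
    _ < G⁻¹ := inv_strictAnti₀ hG hlt

/-- On the reals `essInf` is a supremum that is `0` for the empty set, so positivity of the
essential infimum guarantees that `a` is essentially bounded below. -/
lemma exists_ae_ge_of_lt_essInf {μ : Measure ℝ} {a : ℝ → ℝ} (hxi : 0 < essInf a μ) {r : ℝ}
    (hr : r < essInf a μ) : ∃ c, r < c ∧ ∀ᵐ x ∂μ, c ≤ a x := by
  rw [essInf_eq_sSup] at hxi hr
  have hne : {c : ℝ | μ {x | a x < c} = 0}.Nonempty := by
    rw [Set.nonempty_iff_ne_empty]
    intro h0
    rw [h0, Real.sSup_empty] at hxi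
    exact lt_irrefl _ hxi
  obtain ⟨c, hc, hrc⟩ := exists_lt_of_lt_csSup hne hr
  refine ⟨c, hrc, ?_⟩
  rw [ae_iff]
  simpa using hc

/-- The function `n ↦ 1/H_n − n` is strictly increasing on `(−ξ, ∞)`,
where `H_n := ∫ 1/(a + n) dF`. -/
theorem stmt19 (μ : Measure ℝ) [IsProbabilityMeasure μ] (a : ℝ → ℝ)
    (ha : Measurable a)
    (hnc : ¬ ∃ c : ℝ, a =ᵐ[μ] fun _ => c)
    (hxi : 0 < essInf a μ) :
    StrictMonoOn (fun n : ℝ => (∫ x, (a x + n)⁻¹ ∂μ)⁻¹ - n)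
      (Set.Ioi (-(essInf a μ))) := by
  intro m hm n _ hmn
  obtain ⟨c, hc, hac⟩ := exists_ae_ge_of_lt_essInf hxi (neg_lt.1 (Set.mem_Ioi.1 hm))
  have h := harmonic_translate (μ := μ) (b := fun x => a x + m) (ha.add_const m)
    (δ := c + m) (d := n - m) (by linarith) (by linarith)
    (hac.mono fun x hx => by linarith) (by
      rintro ⟨k, hk⟩
      exact hnc ⟨k - m, hk.mono fun x hx => by linarith⟩)
  have e : ∀ x, a x + m + (n - m) = a x + n := fun x => by ring
  simp only [e] at h
  show _ - m < _ - n
  linarith
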